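/- arXiv:1602.08253 — 2 statements merged into one kernel-verified Lean document; each statement's English description precedes it below -/
import Mathlib

section
/- Let (X,Y) be a torsion pair in an abelian category A, and let A_X be the strictly full subcategory of A whose objects are those admitting a monomorphism into an object of X. Then: (1) for every morphism f between objects of A_X, the kernel and the cokernel of f computed in A again belong to A_X (so A_X is an abelian full subcategory of A and the inclusion A_X → A is exact); (2) the pair (X, Y ∩ A_X) is a torsion pair in A_X; (3) X cogenerates A_X, so (X, Y ∩ A_X) is a tilting torsion pair in A_X. -/
/-!
The class `X` is closed under quotients: if `T ↠ Q` with `T` in `X`, then the composite of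
`T ↠ Q` with the torsion-free quotient `Q ↠ F` is zero, so `F = 0` and `Q` is its own torsion part.
Hence `A_X` is closed under quotients as well: given `C ↪ T` and `C ↠ Q`, the pushout of `T` and `Q`
over `C` is a quotient of `T`, hence lies in `X`, and contains `Q` because monomorphisms in an
abelian category are stable under pushout. Closure under subobjects is immediate, which gives the
kernels, and closure under quotients gives the cokernels and the torsion-free part of every object
of `A_X`.
-/

/-!
STATEMENT 1: Let (X,Y) be a torsion pair in an abelian category A, and let A_X
be the strictly full subcategory of A whose objects are those admitting a
monomorphism into an object of X. Then: (1) for every morphism f between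
objects of A_X, the kernel and the cokernel of f computed in A again belong to
A_X (so A_X is an abelian full subcategory of A and the inclusion A_X → A is
exact); (2) the pair (X, Y ∩ A_X) is a torsion pair in A_X; (3) X cogenerates
A_X, so (X, Y ∩ A_X) is a tilting torsion pair in A_X.
-/

open CategoryTheory Limits

universe v u

namespace Stmt1

variable {A : Type u} [Category.{v} A] [Abelian A]

/-- A predicate on objects is closed under isomorphisms. -/
def IsoClosed (P : A → Prop) : Prop :=
  ∀ ⦃X Y : A⦄, (X ≅ Y) → P X → P Y

/-- A torsion pair `(X, Y)` on the abelian category `A`. -/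
structure TorsionPair (X Y : A → Prop) : Prop where
  isoClosed_torsion : IsoClosed X
  isoClosed_free : IsoClosed Y
  hom_eq_zero : ∀ ⦃T F : A⦄ (f : T ⟶ F), X T → Y F → f = 0
  exists_ses : ∀ C : A, ∃ (T F : A) (i : T ⟶ C) (p : C ⟶ F) (w : i ≫ p = 0),
    X T ∧ Y F ∧ (ShortComplex.mk i p w).ShortExact

/-- The full subcategory of objects cogenerated by `X`, i.e. admitting a
monomorphism into an object of `X`. -/
def CogeneratedBy (X : A → Prop) : A → Prop :=
  fun C => ∃ (T : A) (f : C ⟶ T), X T ∧ Mono f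

theorem TorsionPair.torsion_of_epi {X Y : A → Prop} (h : TorsionPair X Y) {T Q : A} (q : T ⟶ Q)
    [Epi q] (hT : X T) : X Q := by
  obtain ⟨T', F, i, p, w, hT', hF, hS⟩ := h.exists_ses Q
  have hp : p = 0 := by
    rw [← cancel_epi q, comp_zero]
    exact h.hom_eq_zero _ hT hF
  have := hS.mono_f
  have : Epi i := hS.exact.epi_f hp
  have : IsIso i := isIso_of_mono_of_epi i
  exact h.isoClosed_torsion (asIso i) hT'

theorem CogeneratedBy.of_mono {X : A → Prop} {B C : A} (f : B ⟶ C) [Mono f]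
    (hC : CogeneratedBy X C) : CogeneratedBy X B := by
  obtain ⟨T, m, hT, hm⟩ := hC
  exact ⟨T, f ≫ m, hT, mono_comp f m⟩

/-- Push out the embedding of `C` into an object of `X` along `q`. -/
theorem TorsionPair.cogeneratedBy_of_epi {X Y : A → Prop} (h : TorsionPair X Y) {C Q : A}
    (q : C ⟶ Q) [Epi q] (hC : CogeneratedBy X C) : CogeneratedBy X Q := by
  obtain ⟨T, m, hT, hm⟩ := hC
  exact ⟨pushout m q, pushout.inr m q, h.torsion_of_epi (pushout.inl m q) hT, inferInstance⟩

theorem statement_1 (X Y : A → Prop) (h : TorsionPair X Y) :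
    -- (1) A_X is closed under kernels and cokernels computed in A
    (∀ ⦃C D : A⦄ (f : C ⟶ D), CogeneratedBy X C → CogeneratedBy X D →
      CogeneratedBy X (kernel f) ∧ CogeneratedBy X (cokernel f)) ∧
    -- (2) (X, Y ∩ A_X) is a torsion pair in A_X: the Hom-vanishing condition
    --     and the existence, for every object of A_X, of a short exact sequence
    --     with torsion part in X and torsion-free part in Y ∩ A_X
    ((∀ ⦃T F : A⦄ (f : T ⟶ F), X T → (Y F ∧ CogeneratedBy X F) → f = 0) ∧
      (∀ C : A, CogeneratedBy X C →
        ∃ (T F : A) (i : T ⟶ C) (p : C ⟶ F) (w : i ≫ p = 0),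
          X T ∧ (Y F ∧ CogeneratedBy X F) ∧ (ShortComplex.mk i p w).ShortExact)) ∧
    -- (3) X cogenerates A_X
    (∀ C : A, CogeneratedBy X C → ∃ (T : A) (f : C ⟶ T), X T ∧ Mono f) := by
  refine ⟨fun C D f hC hD => ⟨hC.of_mono (kernel.ι f), h.cogeneratedBy_of_epi (cokernel.π f) hD⟩,
    ⟨fun T F f hT hF => h.hom_eq_zero f hT hF.1, fun C hC => ?_⟩, fun C hC => hC⟩
  obtain ⟨T, F, i, p, w, hT, hF, hS⟩ := h.exists_ses C
  have : Epi p := hS.epi_g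
  exact ⟨T, F, i, p, w, hT, ⟨hF, h.cogeneratedBy_of_epi p hC⟩, hS⟩

end Stmt1
end

section
/- Let A be an abelian category and E an n-tilting torsion class in A, endowed with the exact structure Ex induced by A. Then E admits D(E,Ex)-cokernels. Explicitly: for any morphism d : K⁰ → K¹ in E, choose (using that E cogenerates A) a monomorphism α : Coker_A(d) ↪ K² with K² ∈ E; then the composite d¹ : K¹ ↠ Coker_A(d) ↪ K² is a D(E,Ex)-cokernel of d. Moreover, if e : K¹ → L is any other D(E,Ex)-cokernel of d, then the unique morphism ℓ : Coker_A(d) → L with ℓ∘π = e (π the canonical epimorphism) is a monomorphism in A. -/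
/-!
The main point is that `E` is closed under cokernels of monomorphisms, so that any monomorphism
of `A` between objects of `E` is an inflation. For `n ≥ 2` and a monomorphism `G ⟶ M` in `E`, the
sequence `G ⟶ M ⟶ B ⟶ 0` is extended to the left by copies of `G` with maps alternately `0` and
`𝟙`, and finally by a kernel; the closure axiom then gives `B ∈ E`. The cases `n = 0, 1` are
immediate.

Given `g : K₁ ⟶ G` killed by `d`, let `g'` be the induced map from the cokernel of `d`. In the
pushout `P` of `α` and `g'`, the map `G ⟶ P` is a monomorphism because `α` is. Embed `P` into some
`M ∈ E`: the composite `G ⟶ P ⟶ M` is an inflation, and `K₂ ⟶ P ⟶ M` is the factorization.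
For another `D(E,Ex)`-cokernel `e`, factoring `π ≫ α` followed by an inflation through `e` shows
that `ℓ` is the first factor of a monomorphism.
-/

/-!
STATEMENT 12: Let A be an abelian category and E an n-tilting torsion class in
A, endowed with the exact structure Ex induced by A. Then E admits
D(E,Ex)-cokernels. Explicitly: for any morphism d : K⁰ → K¹ in E, choose
(using that E cogenerates A) a monomorphism α : Coker_A(d) ↪ K² with K² ∈ E;
then the composite d¹ : K¹ ↠ Coker_A(d) ↪ K² is a D(E,Ex)-cokernel of d.
Moreover, if e : K¹ → L is any other D(E,Ex)-cokernel of d, then the unique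
morphism ℓ : Coker_A(d) → L with ℓ∘π = e (π the canonical epimorphism) is a
monomorphism in A.
-/

open CategoryTheory Limits

universe v u

namespace Stmt12

variable {A : Type u} [Category.{v} A] [Abelian A]

/-- A predicate on objects is closed under isomorphisms. -/
def IsoClosed (P : A → Prop) : Prop :=
  ∀ ⦃X Y : A⦄, (X ≅ Y) → P X → P Y

/-- A full subcategory cogenerates `A` if every object admits a monomorphism
into an object of the subcategory. -/
def Cogenerates (P : A → Prop) : Prop :=
  ∀ C : A, ∃ (X : A) (f : C ⟶ X), P X ∧ Mono f

/-- `P` is closed under extensions in `A`. -/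
def ClosedUnderExtensions (P : A → Prop) : Prop :=
  ∀ (S : ShortComplex A), S.ShortExact → P S.X₁ → P S.X₃ → P S.X₂

/-- A deflation for the exact structure induced on `E` by the ambient abelian
category: an epimorphism of `A` between objects of `E` whose kernel lies
in `E`. -/
def Deflation (E : A → Prop) {X Y : A} (p : X ⟶ Y) : Prop :=
  E X ∧ E Y ∧ Epi p ∧ E (kernel p)

/-- An inflation for the exact structure induced on `E` by the ambient abelian
category: a monomorphism of `A` between objects of `E` whose cokernel lies
in `E`. -/
def Inflation (E : A → Prop) {X Y : A} (i : X ⟶ Y) : Prop :=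
  E X ∧ E Y ∧ Mono i ∧ E (cokernel i)

/-- `(E, Ex)` admits `D(E,Ex)`-kernels. -/
def HasDKernels (E : A → Prop) : Prop :=
  ∀ ⦃X Y : A⦄ (f : X ⟶ Y), E X → E Y →
    ∃ (K : A) (i : K ⟶ X), E K ∧ i ≫ f = 0 ∧
      ∀ ⦃Z : A⦄ (j : Z ⟶ X), E Z → j ≫ f = 0 →
        ∃ (N : A) (π : N ⟶ Z) (k : N ⟶ K), Deflation E π ∧ π ≫ j = k ≫ i

/-- `c : Y ⟶ C` is a `D(E,Ex)`-cokernel of `d : X ⟶ Y` (all objects in `E`):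
`c ∘ d = 0` and every `g : Y ⟶ G` in `E` with `g ∘ d = 0` factors, after
composing with an inflation `ι : G ↣ M`, through `c`. -/
def IsDCokernel (E : A → Prop) {X Y C : A} (d : X ⟶ Y) (c : Y ⟶ C) : Prop :=
  E C ∧ d ≫ c = 0 ∧
    ∀ ⦃G : A⦄ (g : Y ⟶ G), E G → d ≫ g = 0 →
      ∃ (M : A) (ι : G ⟶ M) (k : C ⟶ M), Inflation E ι ∧ g ≫ ι = c ≫ k

/-- Closure under cokernels of `(n+2)`-term exact sequences
`0 → A' → X_n → ⋯ → X_1 → B → 0` with all `X_i ∈ E`. -/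
def NTermClosed (E : A → Prop) (n : ℕ) : Prop :=
  ∀ (S : ComposableArrows A (n + 1)), S.Exact →
    Mono (S.map' 0 1 (by omega) (by omega)) →
    Epi (S.map' n (n + 1) (by omega) (by omega)) →
    (∀ (i : ℕ) (h1 : 1 ≤ i) (h2 : i ≤ n), E (S.obj' i (by omega))) →
    E (S.obj' (n + 1) (by omega))

/-- An n-tilting torsion class in the abelian category `A`. -/
structure NTiltingTorsionClass (E : A → Prop) (n : ℕ) : Prop where
  isoClosed : IsoClosed E
  cogenerates : Cogenerates E
  closedUnderExtensions : ClosedUnderExtensions E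
  hasDKernels : HasDKernels E
  nTermClosed : NTermClosed E n

/-- An exact sequence extends on the left by the kernel of its first map, or by any map `f` making
the sequence exact at the old leftmost object. -/
lemma exact_precomp {m : ℕ} (T : ComposableArrows A (m + 1)) (hT : T.Exact) {X : A}
    (f : X ⟶ T.left) (w : f ≫ T.map' 0 1 = 0)
    (h : (ShortComplex.mk f (T.map' 0 1) w).Exact) : (T.precomp f).Exact :=
  ComposableArrows.exact_of_δ₀ (S := T.precomp f) (h.exact_toComposableArrows) hT

/-- A monomorphism `i : G ⟶ M` in `E` extends to an exact sequence
`X_{m+2} ⟶ ⋯ ⟶ X_1 ⟶ B ⟶ 0` of any length with all `X_j` in `E` and `B` the cokernel of `i`.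
The extra terms are copies of `G`, joined alternately by zero maps and identities; the last
clause is the invariant that lets the induction continue on the left. -/
lemma exists_padding (E : A → Prop) {G M : A} (i : G ⟶ M) [Mono i] (hG : E G) (hM : E M) (m : ℕ) :
    ∃ T : ComposableArrows A (m + 2), T.Exact ∧
      Epi (T.map' (m + 1) (m + 2) (by omega) (by omega)) ∧
      (∀ (j : ℕ) (hj : j ≤ m + 1), E (T.obj' j (by omega))) ∧
      (E (T.obj' (m + 2) (by omega)) → E (cokernel i)) ∧
      (Mono (T.map' 0 1) ∨ T.map' 0 1 = 0) := by
  induction m with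
  | zero =>
    refine ⟨ComposableArrows.mk₂ i (cokernel.π i), ?_, ?_, ?_, fun h => h, Or.inl ‹Mono i›⟩
    · exact (ShortComplex.exact_cokernel i).exact_toComposableArrows
    · exact inferInstanceAs (Epi (cokernel.π i))
    · intro j hj
      match j, hj with
      | 0, _ => exact hG
      | 1, _ => exact hM
  | succ m ih =>
    obtain ⟨T, hT, hepi, hobj, hlast, hfirst⟩ := ih
    have key : ∀ (f : T.left ⟶ T.left), (T.precomp f).Exact →
        (Mono f ∨ f = 0) → ∃ T : ComposableArrows A (m + 1 + 2), T.Exact ∧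
      Epi (T.map' (m + 1 + 1) (m + 1 + 2) (by omega) (by omega)) ∧
      (∀ (j : ℕ) (hj : j ≤ m + 1 + 1), E (T.obj' j (by omega))) ∧
      (E (T.obj' (m + 1 + 2) (by omega)) → E (cokernel i)) ∧
      (Mono (T.map' 0 1) ∨ T.map' 0 1 = 0) := by
      intro f hf hf'
      refine ⟨T.precomp f, hf, hepi, ?_, hlast, hf'⟩
      intro j hj
      match j, hj with
      | 0, _ => exact hobj 0 (by omega)
      | j + 1, hj => exact hobj j (by omega)
    rcases hfirst with h | h
    · refine key 0 (exact_precomp T hT _ zero_comp ?_) (Or.inr rfl)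
      exact (ShortComplex.exact_iff_mono _ rfl).2 h
    · refine key (𝟙 _) (exact_precomp T hT _ (by rw [h, comp_zero]) ?_) (Or.inl inferInstance)
      exact (ShortComplex.exact_iff_epi _ h).2 (inferInstanceAs (Epi (𝟙 _)))

/-- A subcategory closed under cokernels of `(n+2)`-term exact sequences is closed under cokernels
of monomorphisms of `A`, so each such monomorphism is an inflation. -/
lemma cokernel_mem {E : A → Prop} {n : ℕ} (hE : NTermClosed E n) {G M : A} (i : G ⟶ M) [Mono i]
    (hG : E G) (hM : E M) : E (cokernel i) := by
  match n, hE with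
  | 0, hE =>
    -- the closure condition has no middle terms here, so `E` is all of `A`
    refine hE (ComposableArrows.mk₁ (𝟙 (cokernel i))) (ComposableArrows.exact₁ _)
      (inferInstanceAs (Mono (𝟙 (cokernel i)))) (inferInstanceAs (Epi (𝟙 (cokernel i)))) ?_
    intro j h1 h2
    omega
  | 1, hE =>
    refine hE (ComposableArrows.mk₂ i (cokernel.π i))
      (ShortComplex.exact_cokernel i).exact_toComposableArrows
      ‹Mono i› (inferInstanceAs (Epi (cokernel.π i))) ?_
    intro j h1 h2
    obtain rfl : j = 1 := by omega
    exact hM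
  | m + 2, hE =>
    obtain ⟨T, hT, hepi, hobj, hlast, -⟩ := exists_padding E i hG hM m
    apply hlast
    have hker : Mono (kernel.ι (T.map' 0 1)) := inferInstance
    refine hE (T.precomp (kernel.ι (T.map' 0 1)))
      (exact_precomp T hT _ (kernel.condition _) (ShortComplex.exact_kernel _))
      hker hepi ?_
    intro j h1 h2
    obtain ⟨j, rfl⟩ : ∃ k, j = k + 1 := ⟨j - 1, by omega⟩
    exact hobj j (by omega)

/-- The pushout of `α` along the map induced by `g` receives `G` monomorphically; embedding the
pushout into an object of `E` gives the required inflation. -/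
lemma isDCokernel_of_mono {n : ℕ} {E : A → Prop} (hE : NTiltingTorsionClass E n)
    {K₀ K₁ K₂ : A} (d : K₀ ⟶ K₁) (α : cokernel d ⟶ K₂) (hK₂ : E K₂) [Mono α] :
    IsDCokernel E d (cokernel.π d ≫ α) := by
  refine ⟨hK₂, by simp, fun G g hG w => ?_⟩
  obtain ⟨M, f, hM, hf⟩ := hE.cogenerates (pushout α (cokernel.desc d g w))
  have hmono : Mono (pushout.inr α (cokernel.desc d g w) ≫ f) := mono_comp _ _
  refine ⟨M, pushout.inr α (cokernel.desc d g w) ≫ f, pushout.inl α (cokernel.desc d g w) ≫ f,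
    ⟨hG, hM, hmono, cokernel_mem hE.nTermClosed _ hG hM⟩, ?_⟩
  rw [Category.assoc, pushout.condition_assoc, cokernel.π_desc_assoc]

theorem statement_12 (n : ℕ) (E : A → Prop) (hE : NTiltingTorsionClass E n)
    {K₀ K₁ : A} (d : K₀ ⟶ K₁) (hK₀ : E K₀) (hK₁ : E K₁) :
    -- E admits D(E,Ex)-cokernels: d has a D(E,Ex)-cokernel
    (∃ (C : A) (c : K₁ ⟶ C), IsDCokernel E d c) ∧
    -- explicitly, for any monomorphism α : Coker_A(d) ↪ K² with K² ∈ E, the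
    -- composite K¹ ↠ Coker_A(d) ↪ K² is a D(E,Ex)-cokernel of d
    (∀ (K₂ : A) (α : cokernel d ⟶ K₂), E K₂ → Mono α →
      IsDCokernel E d (cokernel.π d ≫ α)) ∧
    -- and for any other D(E,Ex)-cokernel e : K¹ → L of d, the induced morphism
    -- ℓ : Coker_A(d) → L is a monomorphism in A
    (∀ (L : A) (e : K₁ ⟶ L) (w : d ≫ e = 0), IsDCokernel E d e →
      Mono (cokernel.desc d e w)) := by
  refine ⟨?_, fun K₂ α hK₂ hα => isDCokernel_of_mono hE d α hK₂, fun L e w he => ?_⟩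
  · obtain ⟨K₂, α, hK₂, hα⟩ := hE.cogenerates (cokernel d)
    exact ⟨K₂, _, isDCokernel_of_mono hE d α hK₂⟩
    -- test the universal property of `e` on an embedding `α` of the cokernel into `E`
  · obtain ⟨K₂, α, hK₂, hα⟩ := hE.cogenerates (cokernel d)
    obtain ⟨M, ι, k, ⟨-, -, hι, -⟩, hk⟩ := he.2.2 (cokernel.π d ≫ α) hK₂ (by simp)
    have h : cokernel.desc d e w ≫ k = α ≫ ι := by
      rw [← cancel_epi (cokernel.π d), cokernel.π_desc_assoc, ← hk, Category.assoc]
    have hm : Mono (cokernel.desc d e w ≫ k) := h ▸ mono_comp α ι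
    exact mono_of_mono _ k

end Stmt12
end
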